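/- For every t > 0 and every v₀ > 0, one has ∫_{[v₀,∞)} v μ^{ℓ,r}_t(dv) ≤ (E[R^γ]/(γ−1)²)·t·v₀^{1−γ}. -/

import Mathlib

open MeasureTheory Filter Set
open scoped ENNReal NNReal Topology

noncomputable section

/-- `ℓ_t(s,u)`: the length of the interval `[s,s+u] ∩ [0,t]`. -/
def ellK (t s u : ℝ) : ℝ := max 0 (min (s + u) t - max s 0)

/-- The intensity measure `u^{-γ-1} du` on `(0,∞)`. -/
def muU (γ : ℝ) : Measure ℝ :=
  (volume.restrict (Set.Ioi 0)).withDensity fun u => ENNReal.ofReal (u ^ (-γ - 1))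

/-- The measure `μ^ℓ_t` on `(0,∞)`:
`μ^ℓ_t(A) = ∫_ℝ ∫_0^∞ 1{ℓ_t(s,u) ∈ A} u^{-γ-1} du ds`. -/
def muEll (γ t : ℝ) : Measure ℝ :=
  (Measure.map (fun p : ℝ × ℝ => ellK t p.1 p.2)
    ((volume : Measure ℝ).prod (muU γ))).restrict (Set.Ioi 0)

/-- The measure `μ^{ℓ,r}_t` on `(0,∞)`:
`μ^{ℓ,r}_t(A) = ∫_{(0,∞)} ∫_{(0,∞)} 1{rℓ ∈ A} μ^ℓ_t(dℓ) F_R(dr)`. -/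
def muEllR (γ t : ℝ) (FR : Measure ℝ) : Measure ℝ :=
  (Measure.map (fun p : ℝ × ℝ => p.1 * p.2) (FR.prod (muEll γ t))).restrict (Set.Ioi 0)

/-- The measure `ν` on `[0,1]`: density `s^{-(γ+1)} + ((2-γ)/γ)·s^{-γ}` on `(0,1)` with
respect to Lebesgue measure, together with an atom of mass `1/(γ(γ-1))` at the point `1`. -/
def nuM (γ : ℝ) : Measure ℝ :=
  (volume.restrict (Set.Ioo 0 1)).withDensity
      (fun s => ENNReal.ofReal (s ^ (-(γ + 1)) + (2 - γ) / γ * s ^ (-γ)))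
    + (Real.toNNReal (1 / (γ * (γ - 1)))) • Measure.dirac 1

instance nuM.sigmaFinite (γ : ℝ) : SigmaFinite (nuM γ) := by
  unfold nuM; infer_instance

end

lemma lintegral_ellK (t u : ℝ) (ht : 0 < t) (hu : 0 < u) :
    ∫⁻ s, ENNReal.ofReal (ellK t s u) = ENNReal.ofReal (t * u) := by
  have hms : MeasurableSet {p : ℝ × ℝ | p.1 ≤ p.2 ∧ p.2 ≤ p.1 + u} :=
    (measurableSet_le measurable_fst measurable_snd).inter
      (measurableSet_le measurable_snd (measurable_fst.add_const u))
  have h1 : ∀ s, ENNReal.ofReal (ellK t s u)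
      = ∫⁻ x in Icc 0 t, indicator {p : ℝ × ℝ | p.1 ≤ p.2 ∧ p.2 ≤ p.1 + u} 1 (s, x) := by
    intro s
    have : (fun x : ℝ => indicator {p : ℝ × ℝ | p.1 ≤ p.2 ∧ p.2 ≤ p.1 + u} (1 : ℝ × ℝ → ℝ≥0∞) (s, x))
        = indicator (Icc s (s + u)) 1 := by
      ext x; simp [indicator, Set.mem_Icc]
    rw [this, lintegral_indicator_one measurableSet_Icc,
      Measure.restrict_apply measurableSet_Icc, Icc_inter_Icc, Real.volume_Icc]
    unfold ellK
    rw [ENNReal.ofReal_max]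
    simp
  simp_rw [h1]
  rw [lintegral_lintegral_swap]
  · have h2 : ∀ x : ℝ, ∫⁻ s, indicator {p : ℝ × ℝ | p.1 ≤ p.2 ∧ p.2 ≤ p.1 + u}
        (1 : ℝ × ℝ → ℝ≥0∞) (s, x) = ENNReal.ofReal u := by
      intro x
      have : (fun s : ℝ => indicator {p : ℝ × ℝ | p.1 ≤ p.2 ∧ p.2 ≤ p.1 + u}
          (1 : ℝ × ℝ → ℝ≥0∞) (s, x)) = indicator (Icc (x - u) x) 1 := by
        ext s; simp [indicator, Set.mem_Icc, and_comm]
      rw [this, lintegral_indicator_one measurableSet_Icc, Real.volume_Icc]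
      congr 1; ring
    simp_rw [h2]
    simp [ENNReal.ofReal_mul ht.le, mul_comm]
  · exact (Measurable.indicator measurable_one hms).aemeasurable

lemma tail_int (γ : ℝ) (hγ1 : 1 < γ) (a c : ℝ) (ha : 0 < a) (hc : 0 ≤ c) :
    ∫⁻ u, indicator (Ici a) (fun u => ENNReal.ofReal (c * u)) u ∂(muU γ)
      = ENNReal.ofReal (c * a ^ (1 - γ) / (γ - 1)) := by
  unfold muU
  rw [lintegral_withDensity_eq_lintegral_mul _ (by fun_prop)
    (Measurable.indicator (by fun_prop) measurableSet_Ici)]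
  have h : ∀ u : ℝ, ((fun u : ℝ => ENNReal.ofReal (u ^ (-γ - 1))) *
      indicator (Ici a) (fun u => ENNReal.ofReal (c * u))) u
      = indicator (Ici a) (fun u => ENNReal.ofReal (c * u ^ (-γ))) u := by
    intro u
    by_cases hu : u ∈ Ici a
    · have hu0 : 0 < u := ha.trans_le hu
      simp only [Pi.mul_apply, indicator_of_mem hu]
      rw [← ENNReal.ofReal_mul (by positivity)]
      congr 1
      rw [Real.rpow_sub_one hu0.ne']
      field_simp
    · simp [indicator_of_notMem hu]
  simp_rw [h]
  rw [lintegral_indicator measurableSet_Ici, Measure.restrict_restrict measurableSet_Ici,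
    inter_eq_left.2 (show Ici a ⊆ Ioi 0 from fun x hx => ha.trans_le hx),
    ← Measure.restrict_congr_set Ioi_ae_eq_Ici, ← ofReal_integral_eq_lintegral_ofReal]
  · rw [integral_const_mul, integral_Ioi_rpow_of_lt (by linarith) ha]
    congr 1
    have : γ - 1 ≠ 0 := by linarith
    have h' : -γ + 1 ≠ 0 := by linarith
    rw [show 1 - γ = -γ + 1 by ring, neg_div, ← div_neg, mul_div_assoc]
    congr 3; ring
  · exact (integrableOn_Ioi_rpow_of_lt (by linarith) ha).const_mul c
  · filter_upwards [ae_restrict_mem measurableSet_Ioi] with x hx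
    have : 0 < x := ha.trans hx
    simp only [Pi.zero_apply]; positivity

lemma measurable_ellK (t : ℝ) : Measurable (fun p : ℝ × ℝ => ellK t p.1 p.2) := by
  unfold ellK; fun_prop

instance muU_sfinite (γ : ℝ) : SFinite (muU γ) := by unfold muU; infer_instance

instance muEll_sfinite (γ t : ℝ) : SFinite (muEll γ t) := by unfold muEll; infer_instance

lemma muU_pos (γ : ℝ) : ∀ᵐ u ∂(muU γ), 0 < u := by
  unfold muU
  exact (withDensity_absolutelyContinuous _ _).ae_le (ae_restrict_mem measurableSet_Ioi)

lemma inner_bound (γ : ℝ) (hγ1 : 1 < γ) (t : ℝ) (ht : 0 < t) (v0 : ℝ) (hv0 : 0 < v0)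
    (r : ℝ) (hr : 0 < r) :
    ∫⁻ l, indicator (Ici v0) ENNReal.ofReal (r * l) ∂(muEll γ t)
      ≤ ENNReal.ofReal (r ^ γ * (t * v0 ^ (1 - γ) / (γ - 1))) := by
  have hm : Measurable (indicator (Ici v0) ENNReal.ofReal) :=
    Measurable.indicator (by fun_prop) measurableSet_Ici
  calc _ ≤ ∫⁻ l, indicator (Ici v0) ENNReal.ofReal (r * l)
        ∂(Measure.map (fun p : ℝ × ℝ => ellK t p.1 p.2) ((volume : Measure ℝ).prod (muU γ))) :=
        lintegral_mono' Measure.restrict_le_self le_rfl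
    _ = ∫⁻ p : ℝ × ℝ, indicator (Ici v0) ENNReal.ofReal (r * ellK t p.1 p.2)
        ∂((volume : Measure ℝ).prod (muU γ)) :=
        lintegral_map (hm.comp (measurable_const_mul r)) (measurable_ellK t)
    _ = ∫⁻ u, ∫⁻ s, indicator (Ici v0) ENNReal.ofReal (r * ellK t s u) ∂volume ∂(muU γ) :=
        lintegral_prod_symm' _ (hm.comp ((measurable_ellK t).const_mul r))
    _ ≤ ∫⁻ u, indicator (Ici (v0 / r)) (fun u => ENNReal.ofReal ((r * t) * u)) u ∂(muU γ) := by
        apply lintegral_mono_ae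
        filter_upwards [muU_pos γ] with u hu
        by_cases hu' : u ∈ Ici (v0 / r)
        · rw [indicator_of_mem hu', mul_assoc, ENNReal.ofReal_mul hr.le,
            ← lintegral_ellK t u ht hu, ← lintegral_const_mul' _ _ ENNReal.ofReal_ne_top]
          apply lintegral_mono
          intro s
          simp only
          rw [← ENNReal.ofReal_mul hr.le]
          exact indicator_le_self _ _ _
        · rw [indicator_of_notMem hu', nonpos_iff_eq_zero]
          rw [lintegral_eq_zero_of_ae_eq_zero]
          refine ae_of_all _ fun s => ?_
          apply indicator_of_notMem
          have h1 : ellK t s u ≤ u := by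
            unfold ellK
            have := min_le_left (s + u) t
            have := le_max_left s 0
            apply max_le hu.le; linarith
          simp only [mem_Ici, not_le] at hu' ⊢
          rw [lt_div_iff₀ hr] at hu'
          nlinarith
    _ = ENNReal.ofReal ((r * t) * (v0 / r) ^ (1 - γ) / (γ - 1)) :=
        tail_int γ hγ1 _ _ (by positivity) (by positivity)
    _ = _ := by
        congr 1
        rw [Real.div_rpow hv0.le hr.le, Real.rpow_sub hr, Real.rpow_one]
        field_simp

/-- For every `t > 0`, `v₀ > 0`:
`∫_{[v₀,∞)} v μ^{ℓ,r}_t(dv) ≤ (E[R^γ]/(γ-1)²)·t·v₀^{1-γ}`. -/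
theorem stmt_13 (γ : ℝ) (hγ1 : 1 < γ) (hγ2 : γ < 2)
    (FR : Measure ℝ) [IsProbabilityMeasure FR] (hFRpos : FR (Set.Iic 0) = 0)
    (hmom : Integrable (fun r => r ^ γ) FR)
    (t : ℝ) (ht : 0 < t) (v0 : ℝ) (hv0 : 0 < v0) :
    ∫⁻ v in Set.Ici v0, ENNReal.ofReal v ∂(muEllR γ t FR)
      ≤ ENNReal.ofReal ((∫ r, r ^ γ ∂FR) / (γ - 1) ^ 2 * t * v0 ^ (1 - γ)) := by
  have hm : Measurable (indicator (Ici v0) ENNReal.ofReal) :=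
    Measurable.indicator (by fun_prop) measurableSet_Ici
  have hpos : ∀ᵐ r ∂FR, 0 < r := by
    rw [ae_iff]; simpa [Set.Iic] using hFRpos
  have hnn : 0 ≤ ∫ r, r ^ γ ∂FR :=
    integral_nonneg_of_ae (by filter_upwards [hpos] with r hr; exact (Real.rpow_pos_of_pos hr γ).le)
  have hg : 0 < γ - 1 := by linarith
  calc _ = ∫⁻ v, indicator (Ici v0) ENNReal.ofReal v ∂(muEllR γ t FR) :=
        (lintegral_indicator measurableSet_Ici _).symm
    _ ≤ ∫⁻ v, indicator (Ici v0) ENNReal.ofReal v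
        ∂(Measure.map (fun p : ℝ × ℝ => p.1 * p.2) (FR.prod (muEll γ t))) :=
        lintegral_mono' Measure.restrict_le_self le_rfl
    _ = ∫⁻ p : ℝ × ℝ, indicator (Ici v0) ENNReal.ofReal (p.1 * p.2) ∂(FR.prod (muEll γ t)) :=
        lintegral_map hm (by fun_prop)
    _ = ∫⁻ r, ∫⁻ l, indicator (Ici v0) ENNReal.ofReal (r * l) ∂(muEll γ t) ∂FR :=
        lintegral_prod _ (hm.comp (by fun_prop)).aemeasurable
    _ ≤ ∫⁻ r, ENNReal.ofReal (r ^ γ * (t * v0 ^ (1 - γ) / (γ - 1))) ∂FR := by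
        apply lintegral_mono_ae
        filter_upwards [hpos] with r hr
        exact inner_bound γ hγ1 t ht v0 hv0 r hr
    _ = ENNReal.ofReal (∫ r, r ^ γ * (t * v0 ^ (1 - γ) / (γ - 1)) ∂FR) := by
        rw [ofReal_integral_eq_lintegral_ofReal (hmom.mul_const _)]
        filter_upwards [hpos] with r hr
        simp only [Pi.zero_apply]; positivity
    _ ≤ _ := by
        apply ENNReal.ofReal_le_ofReal
        rw [integral_mul_const]
        have h1 : (γ - 1)⁻¹ ≤ ((γ - 1) ^ 2)⁻¹ := by
          apply inv_anti₀ (by positivity); nlinarith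
        have h2 : 0 ≤ (∫ r, r ^ γ ∂FR) * (t * v0 ^ (1 - γ)) := by positivity
        calc _ = (∫ r, r ^ γ ∂FR) * (t * v0 ^ (1 - γ)) * (γ - 1)⁻¹ := by ring
          _ ≤ (∫ r, r ^ γ ∂FR) * (t * v0 ^ (1 - γ)) * ((γ - 1) ^ 2)⁻¹ := by gcongr
          _ = _ := by ring
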